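/- Polynomial approximation lemma underlying the CG eigenvalue-gap bound (3.1). Let 0 < λ_1 ≤ λ_2 ≤ … ≤ λ_d be real numbers and let 1 ≤ r ≤ d. Then there exists a real polynomial q of degree at most r with q(0) = 1 such that |q(λ_i)| ≤ (λ_{d−r+1} − λ_1)/(λ_{d−r+1} + λ_1) for every i = 1, …, d. (One may take q(t) = (1 − 2t/(λ_1 + λ_{d−r+1}))·∏_{j=d−r+2}^{d} (1 − t/λ_j).) -/

import Mathlib

/-!
The linear polynomial with value `1` at `0` and its root at the midpoint of `[m, M]` is at most
`(M - m) / (M + m)` in absolute value on that interval. Multiplying it by `1 - t / a` for each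
point `a` at which a zero is wanted costs one degree per point and keeps the bound, because
`|1 - x / a| ≤ 1` as soon as `0 ≤ x ≤ 2 a`. For the eigenvalues, `[m, M] = [λ_1, λ_{d-r+1}]` and
the extra zeros are `λ_{d-r+2}, …, λ_d`.
-/

open Polynomial

section ResidualFactor

variable {K : Type*} [Field K]

/-- The linear residual polynomial `1 - t / a`: the polynomial of degree at most one with root `a`
and value `1` at `0`, the normalization of error polynomials in Krylov methods. For `a = 0` it is
the constant `1`, as `0⁻¹ = 0`. -/
noncomputable def residualFactor (a : K) : K[X] :=
  1 - C a⁻¹ * X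

theorem eval_residualFactor (a x : K) : (residualFactor a).eval x = 1 - x / a := by
  simp [residualFactor, div_eq_inv_mul]

theorem eval_self_residualFactor {a : K} (ha : a ≠ 0) : (residualFactor a).eval a = 0 := by
  rw [eval_residualFactor, div_self ha, sub_self]

theorem natDegree_residualFactor_le (a : K) : (residualFactor a).natDegree ≤ 1 := by
  unfold residualFactor
  compute_degree

theorem natDegree_prod_residualFactor_le (s : Finset K) :
    (∏ a ∈ s, residualFactor a).natDegree ≤ s.card :=
  calc (∏ a ∈ s, residualFactor a).natDegree
    _ ≤ ∑ a ∈ s, (residualFactor a).natDegree := natDegree_prod_le _ _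
    _ ≤ s.card • 1 := Finset.sum_le_card_nsmul _ _ _ fun a _ => natDegree_residualFactor_le a
    _ = s.card := nsmul_one _

variable [LinearOrder K] [IsStrictOrderedRing K]

theorem abs_eval_residualFactor_le_one {a x : K} (hx : 0 ≤ x) (hxa : x ≤ 2 * a) :
    |(residualFactor a).eval x| ≤ 1 := by
  have ha : 0 ≤ a := by linarith
  have h_nonneg : 0 ≤ x / a := div_nonneg hx ha
  have h_le_two : x / a ≤ 2 := div_le_of_le_mul₀ ha zero_le_two hxa
  rw [eval_residualFactor, abs_le]
  constructor <;> linarith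

theorem abs_eval_prod_residualFactor_le_one {s : Finset K} {x : K} (hx : 0 ≤ x)
    (hxs : ∀ a ∈ s, x ≤ 2 * a) : |(∏ a ∈ s, residualFactor a).eval x| ≤ 1 := by
  rw [eval_prod, Finset.abs_prod]
  exact Finset.prod_le_one (fun _ _ => abs_nonneg _)
    fun a ha => abs_eval_residualFactor_le_one hx (hxs a ha)

theorem abs_eval_residualFactor_midpoint_le {m M x : K} (h : 0 < M + m) (hx : x ∈ Set.Icc m M) :
    |(residualFactor ((M + m) / 2)).eval x| ≤ (M - m) / (M + m) := by
  have h_eval : (residualFactor ((M + m) / 2)).eval x = (M + m - 2 * x) / (M + m) := by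
    rw [eval_residualFactor]
    field_simp
  rw [h_eval, abs_div, abs_of_pos h]
  gcongr
  rw [abs_le]
  constructor <;> linarith [hx.1, hx.2]

theorem exists_polynomial_abs_eval_le_on_Icc_union {m M : K} (hm : 0 < m) (hmM : m ≤ M)
    (s : Finset K) (hs : ∀ a ∈ s, M ≤ 2 * a) :
    ∃ q : K[X], q.natDegree ≤ s.card + 1 ∧ q.eval 0 = 1 ∧
      ∀ x ∈ Set.Icc m M ∪ s, |q.eval x| ≤ (M - m) / (M + m) := by
  refine ⟨(∏ a ∈ s, residualFactor a) * residualFactor ((M + m) / 2), ?_, ?_, ?_⟩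
  · exact natDegree_mul_le_of_le (natDegree_prod_residualFactor_le s)
      (natDegree_residualFactor_le _)
  · simp [eval_prod, eval_residualFactor]
  · rintro x (hx | hx)
    · have h_prod : |(∏ a ∈ s, residualFactor a).eval x| ≤ 1 :=
        abs_eval_prod_residualFactor_le_one (hm.le.trans hx.1) fun a ha => hx.2.trans (hs a ha)
      have h_midpoint : |(residualFactor ((M + m) / 2)).eval x| ≤ (M - m) / (M + m) :=
        abs_eval_residualFactor_midpoint_le (by linarith) hx
      rw [eval_mul, abs_mul]
      exact (mul_le_of_le_one_left (abs_nonneg _) h_prod).trans h_midpoint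
    · have hx_pos : 0 < x := by linarith [hs x hx]
      have h_prod : (∏ a ∈ s, residualFactor a).eval x = 0 := by
        rw [eval_prod, Finset.prod_eq_zero hx (eval_self_residualFactor hx_pos.ne')]
      rw [eval_mul, h_prod, zero_mul, abs_zero]
      exact div_nonneg (by linarith) (by linarith)

theorem cg_polynomial_lemma_general {ι : Type*} [LinearOrder ι] [LocallyFiniteOrderTop ι]
    {lam : ι → K} (hmono : Monotone lam) {b : ι} (hb : IsBot b) (hpos : 0 < lam b) (k : ι) :
    ∃ q : K[X], q.natDegree ≤ (Finset.Ioi k).card + 1 ∧ q.eval 0 = 1 ∧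
      ∀ i, |q.eval (lam i)| ≤ (lam k - lam b) / (lam k + lam b) := by
  have h_min (i : ι) : lam b ≤ lam i := hmono (hb i)
  have h_above : ∀ a ∈ (Finset.Ioi k).image lam, lam k ≤ 2 * a := by
    simp only [Finset.forall_mem_image, Finset.mem_Ioi]
    intro j hkj
    linarith [hmono hkj.le, h_min j]
  obtain ⟨q, h_deg, h_zero, h_le⟩ :=
    exists_polynomial_abs_eval_le_on_Icc_union hpos (h_min k) _ h_above
  refine ⟨q, h_deg.trans (Nat.succ_le_succ Finset.card_image_le), h_zero, fun i => h_le _ ?_⟩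
  rcases le_or_gt i k with hik | hki
  · exact .inl ⟨h_min i, hmono hik⟩
  · exact .inr (Finset.mem_image_of_mem lam (Finset.mem_Ioi.2 hki))

end ResidualFactor

/-- **Polynomial approximation lemma underlying the CG eigenvalue-gap bound (3.1).**
Given `0 < λ_1 ≤ … ≤ λ_d` (here `lam : Fin d → ℝ` is monotone, `lam ⟨0,_⟩` is `λ_1`,
and `lam ⟨d-r,_⟩` is `λ_{d-r+1}` in 1-based indexing) and `1 ≤ r ≤ d`, there is a real
polynomial `q` of degree at most `r` with `q 0 = 1` and
`|q (λ_i)| ≤ (λ_{d−r+1} − λ_1)/(λ_{d−r+1} + λ_1)` for every `i`. -/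
theorem cg_polynomial_lemma
    {d : ℕ} (r : ℕ) (hr1 : 1 ≤ r) (hrd : r ≤ d)
    (lam : Fin d → ℝ) (hmono : Monotone lam)
    (hpos : 0 < lam ⟨0, by omega⟩) :
    ∃ q : Polynomial ℝ, q.natDegree ≤ r ∧ q.eval 0 = 1 ∧
      ∀ i : Fin d, |q.eval (lam i)| ≤
        (lam ⟨d - r, by omega⟩ - lam ⟨0, by omega⟩) /
          (lam ⟨d - r, by omega⟩ + lam ⟨0, by omega⟩) := by
  obtain ⟨q, h_deg, hq⟩ :=
    cg_polynomial_lemma_general hmono (fun i => Nat.zero_le i) hpos ⟨d - r, by omega⟩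
  exact ⟨q, h_deg.trans (by simp only [Fin.card_Ioi]; omega), hq⟩
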